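/- Let V and H be finite-dimensional complex vector spaces with dim V = q ≥ 1, let d ≥ 2 be an integer, and let ψ : ⋀²V → H be a linear map. Suppose that every non-zero element of the kernel of ψ has rank bigger than 2·min(⌊q/2⌋, d−1). Then dim H ≥ (q choose 2) if q ≤ 2d−1, and dim H ≥ 2(d−1)q − (2d−1 choose 2) if q ≥ 2d. -/

import Mathlib

open Module ExteriorAlgebra

/-- The wedge product of two vectors, as an element of the second exterior power `⋀²V`. -/
noncomputable def wedge {V : Type*} [AddCommGroup V] [Module ℂ V] (x y : V) : ⋀[ℂ]^2 V :=
  ⟨ExteriorAlgebra.ι ℂ x * ExteriorAlgebra.ι ℂ y, by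
    rw [show (⋀[ℂ]^2 V : Submodule ℂ (ExteriorAlgebra ℂ V))
        = (LinearMap.range (ExteriorAlgebra.ι ℂ : V →ₗ[ℂ] ExteriorAlgebra ℂ V)) ^ 2 from rfl,
      pow_two]
    exact Submodule.mul_mem_mul (LinearMap.mem_range_self _ x) (LinearMap.mem_range_self _ y)⟩

section BoundedRank

open scoped Matrix

/-- A proper ideal of a finitely generated algebra over an algebraically closed field vanishes at
some point. -/
theorem Ideal.exists_algHom_eq_zero_of_ne_top {F T : Type*} [Field F] [IsAlgClosed F] [CommRing T]
    [Algebra F T] [Algebra.FiniteType F T] {I : Ideal T} (hI : I ≠ ⊤) :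
    ∃ φ : T →ₐ[F] F, ∀ t ∈ I, φ t = 0 := by
  obtain ⟨M, hM, hIM⟩ := I.exists_le_maximal hI
  let := Ideal.Quotient.field M
  have : Algebra.FiniteType F (T ⧸ M) := .of_surjective (Ideal.Quotient.mkₐ F M)
    (Ideal.Quotient.mkₐ_surjective F M)
  have : Module.Finite F (T ⧸ M) := finite_of_finite_type_of_isJacobsonRing F (T ⧸ M)
  refine ⟨(IsAlgClosed.lift (R := F) (S := T ⧸ M)).comp (Ideal.Quotient.mkₐ F M), fun t ht ↦ ?_⟩
  simp [Ideal.Quotient.eq_zero_iff_mem.mpr (hIM ht)]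

/-- If the `h j` have no common zero on the affine chart `p i₀ ≠ 0` of the projective variety with
homogeneous coordinates `p`, for any `i₀`, then the `p i` are integral over the algebra generated
by the `h j`. -/
theorem isIntegral_adjoin_of_forall_exists_ne_zero {F L ι κ : Type*} [Field F] [IsAlgClosed F]
    [Field L] [Algebra F L] [Finite ι] (p : ι → L) (h : κ → L)
    (H : ∀ i₀, p i₀ ≠ 0 → ∀ φ : Algebra.adjoin F (Set.range fun i ↦ p i / p i₀) →ₐ[F] F,
      ∃ j, ∃ t : Algebra.adjoin F (Set.range fun i ↦ p i / p i₀), (t : L) = h j / p i₀ ∧ φ t ≠ 0)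
    (i : ι) : IsIntegral (Algebra.adjoin F (Set.range h)) (p i) := by
  have key : p i ∈ (integralClosure
      (Subring.closure (Set.range (algebraMap F L) ∪ Set.range h)) L).toSubring := by
    rw [← iInf_valuationSubring_superset, Subring.mem_iInf]
    rintro ⟨O, hO⟩
    have hFO (a : F) : algebraMap F L a ∈ O := hO (.inl ⟨a, rfl⟩)
    have : Nonempty ι := ⟨i⟩
    obtain ⟨i₀, hi₀⟩ := Finite.exists_max fun i ↦ O.valuation (p i)
    change p i ∈ O
    rw [← O.valuation_le_one_iff]
    refine (hi₀ i).trans (not_lt.mp fun hlt ↦ ?_)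
    have hp₀ : p i₀ ≠ 0 := by
      intro h0
      simp [h0] at hlt
    let T := Algebra.adjoin F (Set.range fun i ↦ p i / p i₀)
    let OF : Subalgebra F L := { O.toSubring with algebraMap_mem' := hFO }
    have hTO : T ≤ OF := by
      refine Algebra.adjoin_le ?_
      rintro _ ⟨j, rfl⟩
      change p j / p i₀ ∈ O
      rw [← O.valuation_le_one_iff, map_div₀]
      exact div_le_one_of_le₀ (hi₀ j) zero_le
    let f : T →+* O := (Subalgebra.inclusion hTO).toRingHom
    have hT : Algebra.FiniteType F T :=
      (Subalgebra.fg_iff_finiteType _).mp (Subalgebra.fg_def.mpr ⟨_, Set.finite_range _, rfl⟩)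
    obtain ⟨φ, hφ⟩ := Ideal.exists_algHom_eq_zero_of_ne_top (F := F)
      (Ideal.comap_ne_top f (IsLocalRing.maximalIdeal.isMaximal O).ne_top)
    obtain ⟨j, t, ht, hne⟩ := H i₀ hp₀ φ
    refine hne (hφ t ?_)
    have hval : ((f t : O) : L) = h j / p i₀ := ht
    rw [Ideal.mem_comap, O.valuation_lt_one_iff, hval, map_div₀]
    have hj : O.valuation (h j) ≤ 1 := (O.valuation_le_one_iff _).mpr (hO (.inr ⟨j, rfl⟩))
    exact (div_lt_one₀ (zero_lt_one.trans hlt)).mpr (hj.trans_lt hlt)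
  have e : (Algebra.adjoin F (Set.range h)).toSubring =
      Subring.closure (Set.range (algebraMap F L) ∪ Set.range h) := by
    rw [Algebra.adjoin_eq_ring_closure]
  rw [← e] at key
  exact key

theorem AlgebraicIndependent.card_le_of_forall_isAlgebraic {F L σ κ : Type*} [Field F] [Field L]
    [Algebra F L] [Fintype σ] [Fintype κ] {x : σ → L} (hx : AlgebraicIndependent F x) (h : κ → L)
    (H : ∀ s, IsAlgebraic (Algebra.adjoin F (Set.range h)) (x s)) :
    Fintype.card σ ≤ Fintype.card κ := by
  have hsub : Set.range x ⊆ (matroid F L).closure (Set.range h) := by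
    rw [matroid_closure_eq]
    rintro _ ⟨s, rfl⟩
    exact H s
  have hind : (matroid F L).Indep (Set.range x) := hx.coe_range
  have h1 := hind.encard_le_eRk_of_subset hsub
  rw [Matroid.eRk_closure_eq] at h1
  have h2 := h1.trans ((matroid F L).eRk_le_encard _)
  have h3 : (Set.range h).encard ≤ Fintype.card κ := by
    rw [← Set.image_univ]
    exact (Set.encard_image_le _ _).trans (by simp [Set.encard_univ])
  rw [← Set.image_univ, hx.injective.encard_image, Set.encard_univ] at h2
  simpa using h2.trans h3

theorem Matrix.exists_linearIndependent_rows_of_le_rank {K m n : Type*} [Field K] [Fintype m]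
    [Fintype n] (A : Matrix m n K) {N : ℕ} (hN : N ≤ A.rank) :
    ∃ f : Fin N → m, LinearIndependent K fun i ↦ A (f i) := by
  rw [A.rank_eq_finrank_span_row] at hN
  obtain ⟨g, hg, -, hli⟩ := Submodule.exists_fun_fin_finrank_span_eq K (Set.range A.row)
  choose f hf using hg
  refine ⟨fun i ↦ f (Fin.castLE hN i), ?_⟩
  have : (fun i ↦ A (f (Fin.castLE hN i))) = g ∘ Fin.castLE hN := funext fun i ↦ hf _
  rw [this]
  exact hli.comp _ (Fin.castLE_injective hN)

theorem Matrix.exists_det_submatrix_ne_zero_of_le_rank {K m n : Type*} [Field K] [Fintype m]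
    [Fintype n] (A : Matrix m n K) {N : ℕ} (hN : N ≤ A.rank) :
    ∃ (f : Fin N → m) (g : Fin N → n), (A.submatrix f g).det ≠ 0 := by
  obtain ⟨f, hf⟩ := A.exists_linearIndependent_rows_of_le_rank hN
  have hr : N ≤ (A.submatrix f id)ᵀ.rank := by
    rw [Matrix.rank_transpose, LinearIndependent.rank_matrix (M := A.submatrix f id) hf, Fintype.card_fin]
  obtain ⟨g, hg⟩ := Matrix.exists_linearIndependent_rows_of_le_rank _ hr
  refine ⟨f, g, ?_⟩
  rw [← Matrix.det_transpose]
  exact ((Matrix.isUnit_iff_isUnit_det _).mp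
    (Matrix.linearIndependent_rows_iff_isUnit.mp hg)).ne_zero

theorem Matrix.det_submatrix_eq_zero_of_rank_lt {K m n : Type*} [Field K] [Fintype m]
    [Fintype n] (A : Matrix m n K) {N : ℕ} (hN : A.rank < N) (f : Fin N → m) (g : Fin N → n) :
    (A.submatrix f g).det = 0 := by
  by_contra h
  have h1 := Matrix.rank_of_det_ne_zero h
  have h2 := A.rank_submatrix_le f g
  simp at h1
  omega

theorem Matrix.exists_skew_rank_add_two_le {K n : Type*} [Field K] [NeZero (2 : K)] [Fintype n]
    [DecidableEq n] {A : Matrix n n K} (hA : Aᵀ = -A) (h0 : A ≠ 0) :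
    ∃ (x y : n → K) (A' : Matrix n n K), A'ᵀ = -A' ∧ A'.rank + 2 ≤ A.rank ∧
      A = A' + (vecMulVec x y - vecMulVec y x) := by
  have hskew (i j : n) : A j i = -A i j := congrFun (congrFun hA i) j
  have hdiag (i : n) : A i i = 0 := by
    have := hskew i i
    rw [eq_neg_iff_add_eq_zero, ← two_mul] at this
    exact (mul_eq_zero.mp this).resolve_left two_ne_zero
  obtain ⟨a, b, hab⟩ : ∃ a b, A a b ≠ 0 := by
    by_contra! h
    exact h0 (Matrix.ext h)
  have hne : a ≠ b := fun h ↦ hab (h ▸ hdiag a)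
  let x : n → K := fun i ↦ (A a b)⁻¹ * A a i
  let y : n → K := fun i ↦ A b i
  let A' : Matrix n n K := A - (vecMulVec x y - vecMulVec y x)
  have hA' (i j : n) : A' i j = A i j - (A a b)⁻¹ * (A a i * A b j - A b i * A a j) := by
    simp only [A', x, y, sub_apply, vecMulVec_apply]
    ring
  have hskew' : A'ᵀ = -A' := by
    ext i j
    rw [transpose_apply, neg_apply, hA', hA', hskew i j]
    ring
  have hcola (i : n) : A' i a = 0 := by
    rw [hA', hdiag, hskew a b, hskew a i]
    field_simp
    ring
  have hcolb (i : n) : A' i b = 0 := by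
    rw [hA', hdiag, hskew b i]
    field_simp
    ring
  refine ⟨x, y, A', hskew', ?_, by simp [A']⟩
  have hker (v : n → K) (hv : A *ᵥ v = 0) : A' *ᵥ v = 0 := by
    have hva : A a ⬝ᵥ v = 0 := congrFun hv a
    have hvb : A b ⬝ᵥ v = 0 := congrFun hv b
    have hx : x ⬝ᵥ v = 0 := by
      rw [show x = (A a b)⁻¹ • A a from rfl, smul_dotProduct, hva, smul_zero]
    have hy : y ⬝ᵥ v = 0 := hvb
    simp [A', sub_mulVec, hv, vecMulVec_mulVec, hx, hy]
  let g : LinearMap.ker A.mulVecLin × K × K →ₗ[K] n → K :=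
    (LinearMap.ker A.mulVecLin).subtype.coprod
      ((LinearMap.toSpanSingleton K _ (Pi.single a 1)).coprod
        (LinearMap.toSpanSingleton K _ (Pi.single b 1)))
  have hg (v : LinearMap.ker A.mulVecLin) (s t : K) :
      g (v, s, t) = (v : n → K) + (s • Pi.single a 1 + t • Pi.single b 1) := rfl
  have hgA (i : n) (v : LinearMap.ker A.mulVecLin) (s t : K) :
      (A *ᵥ g (v, s, t)) i = s * A i a + t * A i b := by
    have hv : A *ᵥ (v : n → K) = 0 := v.2
    rw [hg, mulVec_add, hv, mulVec_add, mulVec_smul, mulVec_smul]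
    simp
  have hmem (z) : g z ∈ LinearMap.ker A'.mulVecLin := by
    obtain ⟨v, s, t⟩ := z
    rw [LinearMap.mem_ker, mulVecLin_apply, hg, mulVec_add, hker _ v.2, mulVec_add, mulVec_smul,
      mulVec_smul]
    ext i
    simp [hcola, hcolb]
  have hinj : Function.Injective (g.codRestrict _ hmem) := by
    rw [← LinearMap.ker_eq_bot, LinearMap.ker_codRestrict, LinearMap.ker_eq_bot']
    rintro ⟨v, s, t⟩ hz
    have ha := hgA a v s t
    have hb := hgA b v s t
    rw [hz, hdiag, mulVec_zero] at ha hb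
    have ht : t = 0 := by simpa [hab] using ha
    have hs : s = 0 := by simpa [hab, hskew a b] using hb
    subst ht hs
    have hv : (v : n → K) = 0 := by simpa [hg] using hz
    simpa using hv
  have hle := LinearMap.finrank_le_finrank_of_injective hinj
  have hr := A.mulVecLin.finrank_range_add_finrank_ker
  have hr' := A'.mulVecLin.finrank_range_add_finrank_ker
  simp only [finrank_prod, finrank_self] at hle
  simp only [Matrix.rank]
  omega

/-- A skew-symmetric matrix of rank at most `2k + 1` is a sum of `k` elementary ones. -/
theorem Matrix.exists_eq_sum_vecMulVec_of_rank_le {K n : Type*} [Field K] [NeZero (2 : K)]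
    [Fintype n] [DecidableEq n] {k : ℕ} {A : Matrix n n K} (hA : Aᵀ = -A)
    (hk : A.rank ≤ 2 * k + 1) :
    ∃ x y : Fin k → n → K, A = ∑ i, (vecMulVec (x i) (y i) - vecMulVec (y i) (x i)) := by
  induction k generalizing A with
  | zero =>
    refine ⟨Fin.elim0, Fin.elim0, ?_⟩
    by_contra h0
    obtain ⟨-, -, A', -, hr, -⟩ := exists_skew_rank_add_two_le hA (by simpa using h0)
    omega
  | succ k ih =>
    by_cases h0 : A = 0
    · exact ⟨0, 0, by simp [h0]⟩
    obtain ⟨x₀, y₀, A', hA', hr, rfl⟩ := exists_skew_rank_add_two_le hA h0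
    obtain ⟨x, y, rfl⟩ := ih hA' (by omega)
    exact ⟨Fin.cons x₀ x, Fin.cons y₀ y, by
      rw [Fin.sum_univ_succ, add_comm]
      simp only [Fin.cons_zero, Fin.cons_succ]⟩

/-- Index set of the entries that freely determine a generic skew-symmetric matrix of size
`N + m` and rank at most `N`. -/
abbrev SkewIndex (N m : ℕ) : Type := {p : Fin N × Fin N // p.1 < p.2} ⊕ Fin N × Fin m

theorem SkewIndex.card (N m : ℕ) : Fintype.card (SkewIndex N m) = N.choose 2 + N * m := by
  have e : {p : Fin N × Fin N // p.1 < p.2} ≃ {z : Sym2 (Fin N) // ¬ z.IsDiag} :=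
    { toFun p := ⟨s(p.1.1, p.1.2), by simpa using p.2.ne⟩
      invFun z := ⟨(z.1.inf, z.1.sup), by
        obtain ⟨z, hz⟩ := z
        induction z with | _ a b
        simpa [eq_comm] using hz⟩
      left_inv p := by
        obtain ⟨⟨a, b⟩, h⟩ := p
        have h : a < b := h
        simp [h.le]
      right_inv z := by
        obtain ⟨z, hz⟩ := z
        induction z with | _ a b
        rcases le_total a b with h | h <;> simp [h, Sym2.eq_swap] }
  rw [Fintype.card_sum, Fintype.card_congr e, Sym2.card_subtype_not_diag]
  simp

/-- The skew-symmetric matrix with entries `u` above the diagonal. -/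
def Matrix.skewOfUpper {R ι : Type*} [CommRing R] [LinearOrder ι]
    (u : {p : ι × ι // p.1 < p.2} → R) : Matrix ι ι R :=
  .of fun a b ↦ if h : a < b then u ⟨(a, b), h⟩ else if h : b < a then -u ⟨(b, a), h⟩ else 0

theorem Matrix.transpose_skewOfUpper {R ι : Type*} [CommRing R] [LinearOrder ι]
    (u : {p : ι × ι // p.1 < p.2} → R) : (skewOfUpper u)ᵀ = -skewOfUpper u := by
  ext a b
  simp only [skewOfUpper, transpose_apply, of_apply, neg_apply]
  rcases lt_trichotomy a b with h | rfl | h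
  · simp [h, h.not_gt]
  · simp
  · simp [h, h.not_gt]

theorem Matrix.skewOfUpper_map {R S ι : Type*} [CommRing R] [CommRing S] [LinearOrder ι]
    (f : R →+* S) (u : {p : ι × ι // p.1 < p.2} → R) :
    (skewOfUpper u).map f = skewOfUpper fun p ↦ f (u p) := by
  ext a b
  simp only [skewOfUpper, map_apply, of_apply]
  split_ifs <;> simp

theorem Matrix.skewOfUpper_eq_self {K ι : Type*} [Field K] [NeZero (2 : K)] [LinearOrder ι]
    {A : Matrix ι ι K} (hA : Aᵀ = -A) : (skewOfUpper fun p ↦ A p.1.1 p.1.2) = A := by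
  have hskew (i j : ι) : A j i = -A i j := congrFun (congrFun hA i) j
  ext a b
  simp only [skewOfUpper, of_apply]
  split_ifs with h h'
  · rfl
  · rw [hskew a b, neg_neg]
  · obtain rfl : a = b := le_antisymm (not_lt.mp h') (not_lt.mp h)
    have := hskew a a
    rw [eq_neg_iff_add_eq_zero, ← two_mul] at this
    exact ((mul_eq_zero.mp this).resolve_left two_ne_zero).symm

theorem Matrix.exists_skew_det_ne_zero (K : Type*) [Field K] (k : ℕ) :
    ∃ A : Matrix (Fin (2 * k)) (Fin (2 * k)) K, Aᵀ = -A ∧ A.det ≠ 0 := by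
  let e : Fin (2 * k) ≃ Fin k ⊕ Fin k := (finCongr (two_mul k)).trans finSumFinEquiv.symm
  refine ⟨(J (Fin k) K).submatrix e e, ?_, ?_⟩
  · rw [transpose_submatrix, J_transpose, submatrix_neg]
    rfl
  · rw [det_submatrix_equiv_self]
    exact (isUnit_det_J (Fin k) K).ne_zero

/-- There is a skew-symmetric matrix of size `2k + m` and rank at most `2k`, whose entries in the
first `2k` rows are as algebraically independent as skew-symmetry permits. -/
theorem Matrix.exists_generic_skew_rank_le.{u} (F : Type u) [Field F] [NeZero (2 : F)]
    (k m : ℕ) :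
    ∃ (L : Type u) (_ : Field L) (_ : Algebra F L)
      (P : Matrix (Fin (2 * k) ⊕ Fin m) (Fin (2 * k) ⊕ Fin m) L), Pᵀ = -P ∧ P.rank ≤ 2 * k ∧
      AlgebraicIndependent F (Sum.elim (fun p ↦ P (.inl p.1.1) (.inl p.1.2))
        (fun p ↦ P (.inl p.1) (.inr p.2)) : SkewIndex (2 * k) m → L) := by
  let L := FractionRing (MvPolynomial (SkewIndex (2 * k) m) F)
  let ξ (s : SkewIndex (2 * k) m) : L := algebraMap (MvPolynomial _ F) L (MvPolynomial.X s)
  let B₀ : Matrix (Fin (2 * k)) (Fin (2 * k)) (MvPolynomial (SkewIndex (2 * k) m) F) :=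
    skewOfUpper fun p ↦ MvPolynomial.X (.inl p)
  let B : Matrix (Fin (2 * k)) (Fin (2 * k)) L := skewOfUpper fun p ↦ ξ (.inl p)
  let C : Matrix (Fin (2 * k)) (Fin m) L := .of fun a j ↦ ξ (.inr (a, j))
  have hB : Bᵀ = -B := transpose_skewOfUpper _
  have hdet₀ : B₀.det ≠ 0 := by
    obtain ⟨A, hA, hdet⟩ := exists_skew_det_ne_zero F k
    intro h0
    let f : MvPolynomial (SkewIndex (2 * k) m) F →+* F :=
      MvPolynomial.eval (Sum.elim (fun p ↦ A p.1.1 p.1.2) 0)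
    have hf : B₀.map f = A := by
      rw [skewOfUpper_map]
      simpa [f] using skewOfUpper_eq_self hA
    apply hdet
    rw [← hf, ← RingHom.mapMatrix_apply, ← RingHom.map_det, h0, map_zero]
  have hdet : IsUnit B.det := by
    have hmap : B₀.map (algebraMap _ L) = B := skewOfUpper_map _ _
    rw [← hmap, ← RingHom.mapMatrix_apply, ← RingHom.map_det, isUnit_iff_ne_zero]
    exact (map_ne_zero_iff _ (IsFractionRing.injective _ L)).mpr hdet₀
  have hBinv : (B⁻¹)ᵀ = -B⁻¹ := by
    rw [transpose_nonsing_inv, hB]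
    exact inv_eq_left_inv (by rw [neg_mul_neg, nonsing_inv_mul _ hdet])
  refine ⟨L, inferInstance, inferInstance, fromBlocks B C (-Cᵀ) (-(Cᵀ * (B⁻¹ * C))), ?_, ?_, ?_⟩
  · rw [fromBlocks_transpose, fromBlocks_neg, hB]
    simp [transpose_mul, hBinv, Matrix.mul_assoc]
    exact (neg_neg _).symm
  · have : fromBlocks B C (-Cᵀ) (-(Cᵀ * (B⁻¹ * C))) = fromRows B (-Cᵀ) * fromCols 1 (B⁻¹ * C) := by
      rw [fromRows_mul_fromCols, mul_nonsing_inv_cancel_left _ _ hdet]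
      simp
    rw [this]
    refine (rank_mul_le_left _ _).trans ((rank_le_card_width _).trans ?_)
    simp
  · have : (Sum.elim (fun p ↦ fromBlocks B C (-Cᵀ) (-(Cᵀ * (B⁻¹ * C))) (.inl p.1.1) (.inl p.1.2))
        (fun p ↦ fromBlocks B C (-Cᵀ) (-(Cᵀ * (B⁻¹ * C))) (.inl p.1) (.inr p.2)) :
        SkewIndex (2 * k) m → L) = ξ := by
      ext (p | p)
      · have := p.2
        simp [B, skewOfUpper, this]
      · simp [C]
    rw [this]
    exact (MvPolynomial.algebraicIndependent_X _ F).map'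
      (f := IsScalarTower.toAlgHom F (MvPolynomial (SkewIndex (2 * k) m) F) L)
      (IsFractionRing.injective _ L)

section Bivector

variable {V : Type*} [AddCommGroup V] [Module ℂ V]

/-- The wedge product as a bilinear map. -/
noncomputable def wedgeₗ : V →ₗ[ℂ] V →ₗ[ℂ] ⋀[ℂ]^2 V :=
  LinearMap.mk₂ ℂ wedge
    (fun _ _ _ ↦ Subtype.ext (by simp [wedge, add_mul]))
    (fun _ _ _ ↦ Subtype.ext (by simp [wedge]))
    (fun _ _ _ ↦ Subtype.ext (by simp [wedge, mul_add]))
    (fun _ _ _ ↦ Subtype.ext (by simp [wedge]))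

@[simp]
theorem wedgeₗ_apply (x y : V) : wedgeₗ x y = wedge x y := rfl

theorem wedge_eq_ιMulti (x y : V) : wedge x y = exteriorPower.ιMulti ℂ 2 ![x, y] :=
  Subtype.ext (by simp [wedge, ExteriorAlgebra.ιMulti_apply])

theorem wedge_swap (x y : V) : wedge y x = -wedge x y :=
  Subtype.ext (eq_neg_of_add_eq_zero_left (ExteriorAlgebra.ι_add_mul_swap y x))

variable {n : Type*} [Fintype n]

/-- The bivector with coefficient matrix `A` in the basis `b`. -/
noncomputable def bivector (b : Basis n ℂ V) : Matrix n n ℂ →ₗ[ℂ] ⋀[ℂ]^2 V :=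
  ∑ i, ∑ j, (LinearMap.toSpanSingleton ℂ _ (wedge (b i) (b j))) ∘ₗ Matrix.entryLinearMap ℂ ℂ i j

theorem bivector_apply (b : Basis n ℂ V) (A : Matrix n n ℂ) :
    bivector b A = ∑ i, ∑ j, A i j • wedge (b i) (b j) := by
  simp [bivector]

theorem bivector_vecMulVec (b : Basis n ℂ V) (x y : n → ℂ) :
    bivector b (Matrix.vecMulVec x y) = wedge (∑ i, x i • b i) (∑ i, y i • b i) := by
  rw [bivector_apply, ← wedgeₗ_apply]
  simp only [map_sum, map_smul, LinearMap.sum_apply, LinearMap.smul_apply, wedgeₗ_apply,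
    Matrix.vecMulVec_apply, mul_smul, Finset.smul_sum]
  rw [Finset.sum_comm]
  simp only [smul_comm (x _)]

theorem bivector_ne_zero [DecidableEq n] (b : Basis n ℂ V) {A : Matrix n n ℂ} (hA : Aᵀ = -A)
    (h0 : A ≠ 0) : bivector b A ≠ 0 := by
  obtain ⟨i, j, hij⟩ : ∃ i j, A i j ≠ 0 := by
    by_contra! h
    exact h0 (Matrix.ext h)
  have hskew : A j i = -A i j := congrFun (congrFun hA i) j
  let D : V [⋀^Fin 2]→ₗ[ℂ] ℂ :=
    Matrix.detRowAlternating.compLinearMap (LinearMap.pi ![b.coord i, b.coord j])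
  have hD (k l : n) : exteriorPower.alternatingMapLinearEquiv D (wedge (b k) (b l)) =
      b.coord i (b k) * b.coord j (b l) - b.coord j (b k) * b.coord i (b l) := by
    rw [wedge_eq_ιMulti, exteriorPower.alternatingMapLinearEquiv_apply_ιMulti]
    change Matrix.det (.of fun r ↦ LinearMap.pi ![b.coord i, b.coord j] (![b k, b l] r)) = _
    rw [Matrix.det_fin_two]
    simp
  intro hv
  have h := congrArg (exteriorPower.alternatingMapLinearEquiv D) hv
  rw [bivector_apply, map_zero] at h
  simp only [map_sum, map_smul, hD, smul_eq_mul, mul_sub, Finset.sum_sub_distrib] at h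
  simp [Finsupp.single_apply, hskew] at h
  exact hij h

theorem exists_bivector_eq_sum_wedge [DecidableEq n] (b : Basis n ℂ V) {A : Matrix n n ℂ}
    (hA : Aᵀ = -A) {k : ℕ} (hk : A.rank ≤ 2 * k + 1) :
    ∃ x y : Fin k → V, bivector b A = ∑ i, wedge (x i) (y i) := by
  obtain ⟨x, y, rfl⟩ := Matrix.exists_eq_sum_vecMulVec_of_rank_le hA hk
  refine ⟨fun i ↦ (2 : ℂ) • ∑ j, x i j • b j, fun i ↦ ∑ j, y i j • b j, ?_⟩
  rw [map_sum]
  refine Finset.sum_congr rfl fun i _ ↦ ?_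
  rw [map_sub, bivector_vecMulVec, bivector_vecMulVec,
    wedge_swap (∑ j, x i j • b j) (∑ j, y i j • b j), sub_neg_eq_add, ← two_smul ℂ]
  rw [← wedgeₗ_apply, ← wedgeₗ_apply, map_smul, LinearMap.smul_apply]

end Bivector

/-- If no non-zero element of `ker ψ` is a sum of `k` decomposable bivectors, then the target of
`ψ` has at least the dimension of the variety of bivectors of rank at most `2k`. -/
theorem choose_two_add_mul_le_finrank {V H : Type*} [AddCommGroup V] [Module ℂ V]
    [FiniteDimensional ℂ V] [AddCommGroup H] [Module ℂ H] [FiniteDimensional ℂ H] {k m : ℕ}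
    (hV : finrank ℂ V = 2 * k + m) (ψ : (⋀[ℂ]^2 V) →ₗ[ℂ] H)
    (hker : ∀ v : ⋀[ℂ]^2 V, ψ v = 0 → v ≠ 0 → ¬ ∃ x y : Fin k → V, v = ∑ i, wedge (x i) (y i)) :
    (2 * k).choose 2 + 2 * k * m ≤ finrank ℂ H := by
  let b : Basis (Fin (2 * k) ⊕ Fin m) ℂ V :=
    (finBasisOfFinrankEq ℂ V hV).reindex finSumFinEquiv.symm
  let c := finBasis ℂ H
  obtain ⟨L, _, _, P, hP, hrank, hind⟩ := Matrix.exists_generic_skew_rank_le ℂ k m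
  let p (z : (Fin (2 * k) ⊕ Fin m) × (Fin (2 * k) ⊕ Fin m)) : L := P z.1 z.2
  let γ (j : Fin (finrank ℂ H)) (z : (Fin (2 * k) ⊕ Fin m) × (Fin (2 * k) ⊕ Fin m)) : ℂ :=
    c.coord j (ψ (wedge (b z.1) (b z.2)))
  have hγ (j) (A : Matrix (Fin (2 * k) ⊕ Fin m) (Fin (2 * k) ⊕ Fin m) ℂ) :
      c.coord j (ψ (bivector b A)) = ∑ z, γ j z * A z.1 z.2 := by
    rw [bivector_apply, Fintype.sum_prod_type]
    simp only [map_sum, map_smul, smul_eq_mul, γ, mul_comm]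
  let h (j : Fin (finrank ℂ H)) : L := ∑ z, γ j z • p z
  have hint := isIntegral_adjoin_of_forall_exists_ne_zero (F := ℂ) p h fun z₀ hz₀ φ ↦ by
    let T := Algebra.adjoin ℂ (Set.range fun z ↦ p z / p z₀)
    let Q : Matrix (Fin (2 * k) ⊕ Fin m) (Fin (2 * k) ⊕ Fin m) T :=
      .of fun a b ↦ ⟨p (a, b) / p z₀, Algebra.subset_adjoin ⟨(a, b), rfl⟩⟩
    have hQ : Q.map (T.val : T →+* L) = (p z₀)⁻¹ • P := by
      ext a b
      exact div_eq_inv_mul _ _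
    let A := Q.map (φ : T →+* ℂ)
    have hQskew : Qᵀ = -Q := by
      ext a b
      have : P b a = -P a b := congrFun (congrFun hP a) b
      simp [Q, p, this, neg_div]
    have hAskew : Aᵀ = -A := by
      rw [← Matrix.transpose_map, hQskew]
      ext
      simp [A]
    have hA₀ : A z₀.1 z₀.2 = 1 := by
      have : Q z₀.1 z₀.2 = 1 := Subtype.ext (div_self hz₀)
      simp [A, this]
    have hA : A ≠ 0 := fun h0 ↦ by simp [h0] at hA₀
    have hArank : A.rank ≤ 2 * k + 1 := by
      refine Nat.le_succ_of_le (not_lt.mp fun hlt ↦ ?_)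
      obtain ⟨f, g, hdet⟩ := A.exists_det_submatrix_ne_zero_of_le_rank hlt
      have hQdet : (Q.submatrix f g).det = 0 := by
        refine Subtype.val_injective ?_
        change (T.val : T →+* L) _ = (T.val : T →+* L) 0
        rw [RingHom.map_det, RingHom.mapMatrix_apply, ← Matrix.submatrix_map, hQ, map_zero]
        change ((p z₀)⁻¹ • P.submatrix f g).det = 0
        rw [Matrix.det_smul, Matrix.det_submatrix_eq_zero_of_rank_lt P
          (Nat.lt_succ_of_le hrank), mul_zero]
      apply hdet
      rw [Matrix.submatrix_map, ← RingHom.mapMatrix_apply, ← RingHom.map_det, hQdet, map_zero]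
    have hψ : ψ (bivector b A) ≠ 0 := fun hψ ↦ hker _ hψ (bivector_ne_zero b hAskew hA)
      (exists_bivector_eq_sum_wedge b hAskew hArank)
    obtain ⟨j, hj⟩ : ∃ j, c.coord j (ψ (bivector b A)) ≠ 0 := by
      by_contra! hall
      exact hψ (c.forall_coord_eq_zero_iff.mp hall)
    refine ⟨j, ∑ z, γ j z • Q z.1 z.2, ?_, ?_⟩
    · simp [h, Q, Finset.sum_div, smul_div_assoc]
    · rw [hγ] at hj
      simpa [A] using hj
  have hcard := hind.card_le_of_forall_isAlgebraic h fun s ↦ by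
    rcases s with s | s
    · exact (hint (.inl s.1.1, .inl s.1.2)).isAlgebraic
    · exact (hint (.inl s.1, .inr s.2)).isAlgebraic
  rwa [SkewIndex.card, Fintype.card_fin] at hcard

end BoundedRank

/-- **Theorem 1.1** (linear-algebra content): let `ψ : ⋀²V → H` be a linear map of
finite-dimensional complex vector spaces with `dim V = q ≥ 1`, let `d ≥ 2`, and suppose that
every non-zero element of `ker ψ` has rank bigger than `2·min(⌊q/2⌋, d-1)`, i.e. no non-zero
element of `ker ψ` is a sum of at most `min(⌊q/2⌋, d-1)` decomposable bivectors. Then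
`dim H ≥ C(q,2)` if `q ≤ 2d-1`, and `dim H ≥ 2(d-1)q - C(2d-1, 2)` if `q ≥ 2d`. -/
theorem stmt2 {V H : Type*} [AddCommGroup V] [Module ℂ V] [FiniteDimensional ℂ V]
    [AddCommGroup H] [Module ℂ H] [FiniteDimensional ℂ H]
    (q d : ℕ) (hq : Module.finrank ℂ V = q) (hq1 : 1 ≤ q) (hd : 2 ≤ d)
    (ψ : (⋀[ℂ]^2 V) →ₗ[ℂ] H)
    (hker : ∀ v : ⋀[ℂ]^2 V, ψ v = 0 → v ≠ 0 →
      ¬ ∃ x y : Fin (min (q / 2) (d - 1)) → V, v = ∑ i, wedge (x i) (y i)) :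
    (q ≤ 2 * d - 1 → (q.choose 2 : ℤ) ≤ (Module.finrank ℂ H : ℤ)) ∧
    (2 * d ≤ q → (2 * ((d : ℤ) - 1) * q - ((2 * d - 1).choose 2 : ℤ)
        ≤ (Module.finrank ℂ H : ℤ))) := by
  have hmain {k m : ℕ} (hk : min (q / 2) (d - 1) = k) (hm : q = 2 * k + m) :
      (2 * k).choose 2 + 2 * k * m ≤ finrank ℂ H := by
    subst hk
    exact choose_two_add_mul_le_finrank (hq.trans hm) ψ hker
  refine ⟨fun hle ↦ ?_, fun hge ↦ ?_⟩
  · have h := hmain (k := q / 2) (m := q % 2) (by omega) (by omega)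
    refine Int.ofNat_le.mpr (le_trans ?_ h)
    rcases Nat.mod_two_eq_zero_or_one q with h2 | h2
    · rw [show 2 * (q / 2) = q by omega]
      exact Nat.le_add_right _ _
    · rw [h2, mul_one]
      conv_lhs => rw [show q = 2 * (q / 2) + 1 by omega]
      rw [Nat.choose_succ_succ' _ 1, Nat.choose_one_right, add_comm]
  · obtain ⟨k, rfl⟩ : ∃ k, d = k + 1 := ⟨d - 1, by omega⟩
    obtain ⟨m, rfl⟩ : ∃ m, q = 2 * k + m := ⟨q - 2 * k, by omega⟩
    have h := hmain (k := k) (m := m) (by omega) rfl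
    have hchoose : (2 * k).choose 2 + k = 2 * k * k := by
      rw [Nat.choose_two_right]
      have : 2 * k * (2 * k - 1) / 2 = k * (2 * k - 1) := by
        rw [mul_assoc]; exact Nat.mul_div_cancel_left _ two_pos
      rw [this]
      cases k with
      | zero => rfl
      | succ k => rw [show 2 * (k + 1) - 1 = 2 * k + 1 by omega]; ring
    rw [show 2 * (k + 1) - 1 = 2 * k + 1 by omega, Nat.choose_succ_succ' _ 1, Nat.choose_one_right]
    zify at h hchoose
    push_cast
    linarith
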